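/- arXiv:2601.13906 — 2 statements merged into one kernel-verified Lean document; each statement's English description precedes it below -/
import Mathlib

section
/- Let 𝒫₁ = {AABB, ABAB}, where AABB is the 2-pattern {{1,2},{3,4}} and ABAB is the 2-pattern {{1,3},{2,4}}. Then asymptotically almost surely z_{𝒫₁}(RM_n^(2)) = Θ(n^(1/2)); that is, there exist constants c₁, c₂ > 0 such that the probability that c₁·n^(1/2) ≤ z_{𝒫₁}(RM_n^(2)) ≤ c₂·n^(1/2) tends to 1 as n → ∞. -/
open Finset
open scoped Classical

/-- An ordered `r`-matching of size `n`: a partition of `[r*n] = {1,…,r*n}` into `n`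
pairwise disjoint `r`-element subsets (the edges). -/
def IsOrderedMatching (r n : ℕ) (M : Finset (Finset ℕ)) : Prop :=
  M.card = n ∧ (∀ e ∈ M, e.card = r) ∧
  (∀ e ∈ M, ∀ f ∈ M, e ≠ f → Disjoint e f) ∧
  M.biUnion id = Finset.Icc 1 (r * n)

/-- Two disjoint `r`-element sets `e`, `f` form the `r`-pattern `P`: the unique
order-preserving bijection from `e ∪ f` onto `[2r]` maps the pair `{e, f}` onto `P`. -/
def FormsPattern (r : ℕ) (e f : Finset ℕ) (P : Finset (Finset ℕ)) : Prop :=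
  ∃ φ : ℕ → ℕ, StrictMonoOn φ ↑(e ∪ f) ∧
    (e ∪ f).image φ = Finset.Icc 1 (2 * r) ∧
    ({e.image φ, f.image φ} : Finset (Finset ℕ)) = P

/-- A `Ps`-clique: a family of pairwise disjoint `r`-element subsets of `ℕ`, every two of
which form a pattern belonging to `Ps`. -/
def IsClique (r : ℕ) (Ps : Set (Finset (Finset ℕ))) (K : Finset (Finset ℕ)) : Prop :=
  (∀ e ∈ K, e.card = r) ∧ (∀ e ∈ K, ∀ f ∈ K, e ≠ f → Disjoint e f) ∧
  (∀ e ∈ K, ∀ f ∈ K, e ≠ f → ∃ P ∈ Ps, FormsPattern r e f P)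

/-- `z_Ps(M)`: the maximum size of a subfamily of `M` that is a `Ps`-clique. -/
noncomputable def zClique (r : ℕ) (Ps : Set (Finset (Finset ℕ))) (M : Finset (Finset ℕ)) : ℕ :=
  sSup {k | ∃ K : Finset (Finset ℕ), K ⊆ M ∧ IsClique r Ps K ∧ K.card = k}

/-- All ordered `r`-matchings of size `n` (as a finset). -/
noncomputable def matchingFamilies (r n : ℕ) : Finset (Finset (Finset ℕ)) :=
  ((Finset.Icc 1 (r * n)).powerset.powerset).filter (IsOrderedMatching r n)

/-- The probability of the event `A` for a uniformly random ordered `r`-matching of size `n`. -/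
noncomputable def prob (r n : ℕ) (A : Finset (Finset ℕ) → Prop) : ℝ :=
  (((matchingFamilies r n).filter A).card : ℝ) / ((matchingFamilies r n).card : ℝ)

/-- Expectation of `X` with respect to a uniformly random ordered `r`-matching of size `n`. -/
noncomputable def expect (r n : ℕ) (X : Finset (Finset ℕ) → ℝ) : ℝ :=
  (∑ M ∈ matchingFamilies r n, X M) / ((matchingFamilies r n).card : ℝ)

/-- An `r`-partite `r`-pattern: each edge contains exactly one of `{2i-1, 2i}` for each
`i = 1, …, r`. -/
def IsPartitePattern (r : ℕ) (P : Finset (Finset ℕ)) : Prop :=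
  IsOrderedMatching r 2 P ∧
  ∀ e ∈ P, ∀ i ∈ Finset.Icc 1 r, (e ∩ {2 * i - 1, 2 * i}).card = 1

/-- An `r`-pattern `P` is collectable if there exist arbitrarily large `{P}`-cliques. -/
def Collectable (r : ℕ) (P : Finset (Finset ℕ)) : Prop :=
  ∀ k : ℕ, ∃ K : Finset (Finset ℕ), IsClique r {P} K ∧ K.card = k

/-- The word of a pattern `P` over `{A=true, B=false}`: the `j`-th letter is `true` iff
vertex `j` lies in the edge of `P` containing `1`. -/
noncomputable def patternWord (r : ℕ) (P : Finset (Finset ℕ)) : List Bool :=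
  (List.range (2 * r)).map (fun j => decide (∃ e ∈ P, 1 ∈ e ∧ j + 1 ∈ e))

/-- `lam` is a splitting of the word `w` into consecutive blocks of the form
`A^t B^t` or `B^t A^t` with half-lengths given by `lam`. -/
def IsBlockSplitting (w : List Bool) (lam : List ℕ) : Prop :=
  (∀ t ∈ lam, 1 ≤ t) ∧
  ∃ bs : List Bool, bs.length = lam.length ∧
    w = (List.zipWith (fun t b => List.replicate t b ++ List.replicate t !b) lam bs).flatten

/-- The pattern `P` has composition `lam` (the sequence of half-lengths of the blocks of
its unique splitting). -/
def HasComposition (r : ℕ) (P : Finset (Finset ℕ)) (lam : List ℕ) : Prop :=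
  IsBlockSplitting (patternWord r P) lam

/-- Two distinct collectable `r`-patterns are harmonious if they have the same composition. -/
def Harmonious (r : ℕ) (P Q : Finset (Finset ℕ)) : Prop :=
  P ≠ Q ∧ Collectable r P ∧ Collectable r Q ∧
  ∃ lam : List ℕ, HasComposition r P lam ∧ HasComposition r Q lam

/-- A pair of distinct `r`-patterns is a mismatch if exactly one of them is collectable, or
both are collectable but their compositions differ. -/
def Mismatch (r : ℕ) (P Q : Finset (Finset ℕ)) : Prop :=
  P ≠ Q ∧
  ((Collectable r P ∧ ¬ Collectable r Q) ∨
   (¬ Collectable r P ∧ Collectable r Q) ∨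
   (Collectable r P ∧ Collectable r Q ∧
     ¬ ∃ lam : List ℕ, HasComposition r P lam ∧ HasComposition r Q lam))

/-- The trace of an ordered `r`-matching of size `k` on `[rk]`: the `j`-th letter equals
`i` when `j` is the `i`-th smallest element of the edge containing `j`. -/
noncomputable def trace (r k : ℕ) (M : Finset (Finset ℕ)) : List ℕ :=
  (List.range (r * k)).map (fun j₀ =>
    ((Finset.Icc 1 (r * k)).filter
      (fun x => x ≤ j₀ + 1 ∧ ∃ e ∈ M, j₀ + 1 ∈ e ∧ x ∈ e)).card)

/-- `a_Ps(k)`: the number of `Ps`-cliques of size `k` whose edges partition `[rk]`. -/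
noncomputable def cliqueCount (r : ℕ) (Ps : Set (Finset (Finset ℕ))) (k : ℕ) : ℕ :=
  (((Finset.Icc 1 (r * k)).powerset.powerset).filter
    (fun M => IsOrderedMatching r k M ∧ IsClique r Ps M)).card

/-- The maximum size of any `Ps`-clique whatsoever. -/
noncomputable def maxCliqueSize (r : ℕ) (Ps : Set (Finset (Finset ℕ))) : ℕ :=
  sSup {k | ∃ K : Finset (Finset ℕ), IsClique r Ps K ∧ K.card = k}

/-- `M` contains a copy of the ordered `r`-matching `H` of size `k`: a subfamily `N ⊆ M` of
`k` edges such that the order-preserving bijection from the union of the edges of `N`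
onto `[rk]` maps `N` onto `H`. -/
def ContainsCopy (r k : ℕ) (H M : Finset (Finset ℕ)) : Prop :=
  ∃ N ⊆ M, N.card = k ∧ ∃ φ : ℕ → ℕ,
    StrictMonoOn φ ↑(N.biUnion id) ∧
    (N.biUnion id).image φ = Finset.Icc 1 (r * k) ∧
    N.image (fun e => e.image φ) = H

/-- Delete the `j`-th smallest element of the finite set `e`. -/
def deleteJth (j : ℕ) (e : Finset ℕ) : Finset ℕ :=
  e.filter (fun x => (e.filter (· ≤ x)).card ≠ j)

/-- Relabel the elements of `e` order-preservingly by their ranks in `V`. -/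
def relabel (V : Finset ℕ) (e : Finset ℕ) : Finset ℕ :=
  e.image (fun x => (V.filter (· ≤ x)).card)

/-- `S^(−j)`: delete from each edge of the pattern `S` its `j`-th smallest element and
relabel the remaining vertices order-preservingly. -/
def patternDelete (j : ℕ) (S : Finset (Finset ℕ)) : Finset (Finset ℕ) :=
  (S.image (deleteJth j)).image (relabel ((S.image (deleteJth j)).biUnion id))

/-- The 2-pattern `AABB`. -/
def pAABB : Finset (Finset ℕ) := {{1, 2}, {3, 4}}
/-- The 2-pattern `ABAB`. -/
def pABAB : Finset (Finset ℕ) := {{1, 3}, {2, 4}}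

/-! Two disjoint pairs form `AABB` or `ABAB` exactly when one of them precedes the other, meaning
that both its left and its right end are smaller. So a clique is a chain for this strict order.

Upper bound: a chain of `k` pairs is determined by its set of left ends and its set of right ends,
so there are at most `(2n choose k)²` of them, and each lies in a random matching with probability
at most `n⁻ᵏ` when `2k ≤ n`. The union bound gives `P(z ≥ k) ≤ (4 e² n / k²)ᵏ`.

Lower bound: the antichains are the nestings. The outermost edge of a nesting joins its extreme
vertices, so by induction a nesting is determined by its vertex set. If `z ≤ k`, Mirsky's theorem
splits the matching into `k` nestings, so it can be recovered from a colouring of the `2n` vertices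
with `k` colours. Hence there are at most `k ^ (2n)` such matchings, out of at least
`n! ≥ (n / e)ⁿ`, and `P(z ≤ k) ≤ (e k² / n)ⁿ`.
-/

open Filter Real Topology

section PerfectMatching

variable {α : Type*} [DecidableEq α] {r n : ℕ} {V W : Finset α} {K M : Finset (Finset α)}

/-- `M` is a perfect `r`-matching of the vertex set `V`: a partition of `V` into `r`-element edges.
Unlike in `IsOrderedMatching`, the vertex set is arbitrary, so that edges can be removed. -/
structure IsPerfectMatching (r : ℕ) (V : Finset α) (M : Finset (Finset α)) : Prop where
  card_eq : ∀ e ∈ M, #e = r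
  pairwiseDisjoint : (M : Set (Finset α)).PairwiseDisjoint id
  biUnion_eq : M.biUnion id = V

namespace IsPerfectMatching

lemma subset_of_mem (h : IsPerfectMatching r V M) {e : Finset α} (he : e ∈ M) : e ⊆ V :=
  h.biUnion_eq ▸ subset_biUnion_of_mem id he

lemma exists_mem (h : IsPerfectMatching r V M) {x : α} (hx : x ∈ V) : ∃ e ∈ M, x ∈ e := by
  simpa [← h.biUnion_eq] using hx

lemma card_vertices (h : IsPerfectMatching r V M) : #V = #M * r := by
  rw [← h.biUnion_eq, card_biUnion h.pairwiseDisjoint]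
  exact sum_const_nat h.card_eq

lemma mono (h : IsPerfectMatching r V M) (hK : K ⊆ M) : IsPerfectMatching r (K.biUnion id) K where
  card_eq e he := h.card_eq e (hK he)
  pairwiseDisjoint := h.pairwiseDisjoint.subset (coe_subset.2 hK)
  biUnion_eq := rfl

lemma sdiff (hM : IsPerfectMatching r V M) (hK : IsPerfectMatching r W K) (hKM : K ⊆ M) :
    IsPerfectMatching r (V \ W) (M \ K) where
  card_eq e he := hM.card_eq e (sdiff_subset he)
  pairwiseDisjoint := hM.pairwiseDisjoint.subset (coe_subset.2 sdiff_subset)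
  biUnion_eq := by
    ext x
    simp only [← hM.biUnion_eq, ← hK.biUnion_eq, mem_biUnion, Finset.mem_sdiff, id]
    constructor
    · rintro ⟨e, ⟨heM, heK⟩, hxe⟩
      refine ⟨⟨e, heM, hxe⟩, ?_⟩
      rintro ⟨f, hfK, hxf⟩
      exact heK (hM.pairwiseDisjoint.elim_finset heM (hKM hfK) x hxe hxf ▸ hfK)
    · rintro ⟨⟨e, heM, hxe⟩, hxK⟩
      exact ⟨e, ⟨heM, fun heK => hxK ⟨e, heK, hxe⟩⟩, hxe⟩

lemma union (hM : IsPerfectMatching r V M) (hK : IsPerfectMatching r W K) (hVW : Disjoint V W) :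
    IsPerfectMatching r (V ∪ W) (M ∪ K) where
  card_eq e he := (mem_union.1 he).elim (hM.card_eq e) (hK.card_eq e)
  pairwiseDisjoint := by
    rw [coe_union]
    refine (hM.pairwiseDisjoint.union hK.pairwiseDisjoint) fun e he f hf _ => ?_
    exact hVW.mono (hM.subset_of_mem he) (hK.subset_of_mem hf)
  biUnion_eq := by rw [union_biUnion, hM.biUnion_eq, hK.biUnion_eq]

lemma disjoint_edges (hr : r ≠ 0) (hM : IsPerfectMatching r V M) (hK : IsPerfectMatching r W K)
    (hVW : Disjoint V W) : Disjoint M K := by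
  refine disjoint_left.2 fun e heM heK => hr ?_
  have he : e = ∅ :=
    disjoint_self_iff_empty _ |>.1 (hVW.mono (hM.subset_of_mem heM) (hK.subset_of_mem heK))
  rw [← hM.card_eq e heM, he, card_empty]

end IsPerfectMatching

lemma isPerfectMatching_singleton (e : Finset α) : IsPerfectMatching #e e {e} where
  card_eq := by simp
  pairwiseDisjoint := by simp
  biUnion_eq := by simp

/-- The finite set of all perfect `r`-matchings of the vertex set `V`. -/
noncomputable def perfectMatchings (r : ℕ) (V : Finset α) : Finset (Finset (Finset α)) :=
  {M ∈ V.powerset.powerset | IsPerfectMatching r V M}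

lemma mem_perfectMatchings : M ∈ perfectMatchings r V ↔ IsPerfectMatching r V M := by
  refine mem_filter.trans (and_iff_right_of_imp fun h => mem_powerset.2 fun e he => ?_)
  exact mem_powerset.2 (h.subset_of_mem he)

lemma card_filter_subset_perfectMatchings (hr : r ≠ 0) (hK : IsPerfectMatching r W K)
    (hWV : W ⊆ V) :
    #{M ∈ perfectMatchings r V | K ⊆ M} = #(perfectMatchings r (V \ W)) := by
  apply card_bij' (fun M _ => M \ K) (fun M _ => M ∪ K)
  · intro M hM
    rw [mem_filter, mem_perfectMatchings] at hM
    exact mem_perfectMatchings.2 (hM.1.sdiff hK hM.2)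
  · intro M hM
    rw [mem_perfectMatchings] at hM
    rw [mem_filter, mem_perfectMatchings]
    refine ⟨?_, subset_union_right⟩
    simpa only [sdiff_union_of_subset hWV] using hM.union hK sdiff_disjoint
  · intro M hM
    exact sdiff_union_of_subset (mem_filter.1 hM).2
  · intro M hM
    rw [mem_perfectMatchings] at hM
    exact union_sdiff_cancel_right (hM.disjoint_edges hr hK sdiff_disjoint)

lemma perfectMatchings_empty (hr : r ≠ 0) : perfectMatchings r (∅ : Finset α) = {∅} := by
  ext M
  rw [mem_perfectMatchings, mem_singleton]
  constructor
  · intro hM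
    have hcard : #M * r = 0 := by simpa using hM.card_vertices.symm
    exact card_eq_zero.1 ((mul_eq_zero.1 hcard).resolve_right hr)
  · rintro rfl
    exact ⟨by simp, by simp, by simp⟩

lemma perfectMatchings_eq_biUnion {v : α} (hv : v ∈ V) :
    perfectMatchings r V = ((V.erase v).powersetCard (r - 1)).biUnion
      fun t => {M ∈ perfectMatchings r V | {insert v t} ⊆ M} := by
  ext M
  simp only [mem_biUnion, mem_filter, singleton_subset_iff, mem_powersetCard]
  refine ⟨fun hM => ?_, fun ⟨_, _, hM, _⟩ => hM⟩
  have hM' := mem_perfectMatchings.1 hM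
  obtain ⟨e, he, hve⟩ := hM'.exists_mem hv
  refine ⟨e.erase v, ⟨erase_subset_erase v (hM'.subset_of_mem he), ?_⟩, hM, ?_⟩
  · rw [card_erase_of_mem hve, hM'.card_eq e he]
  · rwa [insert_erase hve]

lemma card_perfectMatchings (hr : r ≠ 0) :
    ∀ {n : ℕ} {V : Finset α}, #V = n * r → #(perfectMatchings r V) = n.uniformBell r
  | 0, V, hV => by
    obtain rfl : V = ∅ := by simpa using hV
    rw [perfectMatchings_empty hr, card_singleton, Nat.uniformBell_zero_left]
  | n + 1, V, hV => by
    obtain ⟨v, hv⟩ : V.Nonempty := card_pos.1 (hV ▸ by positivity)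
    have hfiber : ∀ t ∈ (V.erase v).powersetCard (r - 1),
        #{M ∈ perfectMatchings r V | {insert v t} ⊆ M} = n.uniformBell r := by
      intro t ht
      obtain ⟨htV, htr⟩ := mem_powersetCard.1 ht
      have hvt : #(insert v t) = r := by
        rw [card_insert_of_notMem fun h => notMem_erase v V (htV h)]
        omega
      have hsub : insert v t ⊆ V := insert_subset hv (htV.trans (erase_subset v V))
      have hmatch := isPerfectMatching_singleton (insert v t)
      rw [hvt] at hmatch
      rw [card_filter_subset_perfectMatchings hr hmatch hsub]
      apply card_perfectMatchings hr
      rw [card_sdiff_of_subset hsub, hvt, hV, Nat.succ_mul, Nat.add_sub_cancel]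
    rw [perfectMatchings_eq_biUnion hv, card_biUnion, sum_const_nat hfiber, card_powersetCard,
      card_erase_of_mem hv, hV, Nat.uniformBell_succ_left, Nat.succ_mul]
    intro s hs t ht hst
    refine disjoint_left.2 fun M hMs hMt => hst ?_
    simp only [mem_filter, singleton_subset_iff, mem_perfectMatchings] at hMs hMt
    have hvs : v ∉ s := fun h => notMem_erase v V ((mem_powersetCard.1 hs).1 h)
    have hvt : v ∉ t := fun h => notMem_erase v V ((mem_powersetCard.1 ht).1 h)
    rw [← erase_insert hvs, ← erase_insert hvt, hMs.1.pairwiseDisjoint.elim_finset hMs.2 hMt.2 v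
      (mem_insert_self v s) (mem_insert_self v t)]

lemma card_filter_subset_perfectMatchings_le (hr : r ≠ 0) (hV : #V = n * r)
    (K : Finset (Finset α)) :
    #{M ∈ perfectMatchings r V | K ⊆ M} ≤ (n - #K).uniformBell r := by
  obtain hempty | ⟨M, hM⟩ := {M ∈ perfectMatchings r V | K ⊆ M}.eq_empty_or_nonempty
  · simp [hempty]
  rw [mem_filter, mem_perfectMatchings] at hM
  have hK := hM.1.mono hM.2
  have hKV : K.biUnion id ⊆ V := biUnion_subset.2 fun e he => hM.1.subset_of_mem (hM.2 he)
  rw [card_filter_subset_perfectMatchings hr hK hKV, card_perfectMatchings hr]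
  rw [card_sdiff_of_subset hKV, hK.card_vertices, hV, Nat.sub_mul]

end PerfectMatching

lemma matchingFamilies_eq_perfectMatchings {r : ℕ} (hr : r ≠ 0) (n : ℕ) :
    matchingFamilies r n = perfectMatchings r (Icc 1 (r * n)) := by
  ext M
  simp only [matchingFamilies, perfectMatchings, mem_filter, and_congr_right_iff]
  refine fun _ => ⟨fun ⟨_, hcard, hdisj, hunion⟩ => ⟨hcard, hdisj, hunion⟩, fun hM => ?_⟩
  refine ⟨?_, hM.card_eq, hM.pairwiseDisjoint, hM.biUnion_eq⟩
  have hcard : r * n = #M * r := by simpa using hM.card_vertices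
  exact Nat.eq_of_mul_eq_mul_right (Nat.pos_of_ne_zero hr) (by rw [← hcard, mul_comm])

section Precedes

variable {α : Type*} [LinearOrder α] {V : Finset α} {K K' : Finset (Finset α)}

/-- `e` precedes `f` if both extreme vertices of `e` are smaller than those of `f`. For disjoint
pairs this says that they form `AABB` or `ABAB` with `e` first. -/
def Precedes (e f : Finset α) : Prop := e.min < f.min ∧ e.max < f.max

instance : IsStrictOrder (Finset α) Precedes where
  irrefl _ h := lt_irrefl _ h.1
  trans _ _ _ h h' := ⟨h.1.trans h'.1, h.2.trans h'.2⟩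

lemma exists_lt_and_eq_pair {e : Finset α} (he : #e = 2) : ∃ a b, a < b ∧ e = {a, b} := by
  obtain ⟨x, y, hxy, rfl⟩ := card_eq_two.1 he
  obtain h | h := hxy.lt_or_gt
  · exact ⟨x, y, h, rfl⟩
  · exact ⟨y, x, h, pair_comm x y⟩

lemma min_pair {a b : α} (hab : a < b) : ({a, b} : Finset α).min = a := by
  rw [min_insert, min_singleton, min_eq_left (WithTop.coe_le_coe.2 hab.le)]

lemma max_pair {a b : α} (hab : a < b) : ({a, b} : Finset α).max = b := by
  rw [max_insert, max_singleton, max_eq_right (WithBot.coe_le_coe.2 hab.le)]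

lemma precedes_pair_iff {a b c d : α} (hab : a < b) (hcd : c < d) :
    Precedes ({a, b} : Finset α) {c, d} ↔ a < c ∧ b < d := by
  rw [Precedes, min_pair hab, min_pair hcd, max_pair hab, max_pair hcd, WithTop.coe_lt_coe,
    WithBot.coe_lt_coe]

lemma eq_of_min_eq_of_max_eq {e f : Finset α} (he : #e = 2) (hf : #f = 2) (hmin : e.min = f.min)
    (hmax : e.max = f.max) : e = f := by
  obtain ⟨a, b, hab, rfl⟩ := exists_lt_and_eq_pair he
  obtain ⟨c, d, hcd, rfl⟩ := exists_lt_and_eq_pair hf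
  rw [min_pair hab, min_pair hcd, WithTop.coe_inj] at hmin
  rw [max_pair hab, max_pair hcd, WithBot.coe_inj] at hmax
  rw [hmin, hmax]

lemma injOn_min_of_isChain (hK : IsChain Precedes (K : Set (Finset α))) :
    Set.InjOn Finset.min (K : Set (Finset α)) := by
  intro e he f hf hef
  by_contra hne
  obtain h | h := hK he hf hne
  exacts [h.1.ne hef, h.1.ne' hef]

lemma injOn_max_of_isChain (hK : IsChain Precedes (K : Set (Finset α))) :
    Set.InjOn Finset.max (K : Set (Finset α)) := by
  intro e he f hf hef
  by_contra hne
  obtain h | h := hK he hf hne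
  exacts [h.2.ne hef, h.2.ne' hef]

lemma eqOn_of_strictMonoOn_of_image_eq {β γ : Type*} [LinearOrder β] [Preorder γ] {s : Set β}
    (hs : s.Finite) {f g : β → γ} (hf : StrictMonoOn f s) (hg : StrictMonoOn g s)
    (himage : f '' s = g '' s) : Set.EqOn f g s := by
  have := hs.to_subtype
  have hrange : Set.range (s.domRestrict f) = Set.range (s.domRestrict g) := by
    simpa only [Set.range_domRestrict] using himage
  exact Set.domRestrict_eq_domRestrict_iff.1
    ((StrictMono.range_inj (strictMono_domRestrict.2 hf) (strictMono_domRestrict.2 hg)).1 hrange)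

lemma exists_strictMonoOn_of_isChain (hK : IsChain Precedes (K : Set (Finset α))) :
    ∃ φ : WithTop α → WithBot α, StrictMonoOn φ (K.image Finset.min) ∧
      ∀ e ∈ K, φ e.min = e.max := by
  have hleft : ∀ e ∈ K, Function.invFunOn Finset.min (K : Set (Finset α)) e.min = e :=
    fun e he => (injOn_min_of_isChain hK).leftInvOn_invFunOn he
  refine ⟨fun x => (Function.invFunOn Finset.min (K : Set (Finset α)) x).max, ?_,
    fun e he => congrArg Finset.max (hleft e he)⟩
  intro x hx y hy hxy
  obtain ⟨e, he, rfl⟩ := mem_image.1 hx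
  obtain ⟨f, hf, rfl⟩ := mem_image.1 hy
  simp only [hleft e he, hleft f hf]
  obtain h | h := hK he hf (by rintro rfl; exact hxy.false)
  exacts [h.2, absurd hxy h.1.not_gt]

lemma isChain_subset_of_image_eq (hK : IsChain Precedes (K : Set (Finset α)))
    (hK' : IsChain Precedes (K' : Set (Finset α))) (hcard : ∀ e ∈ K, #e = 2)
    (hcard' : ∀ e ∈ K', #e = 2) (hmin : K.image Finset.min = K'.image Finset.min)
    (hmax : K.image Finset.max = K'.image Finset.max) : K ⊆ K' := by
  obtain ⟨φ, hφ, hφK⟩ := exists_strictMonoOn_of_isChain hK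
  obtain ⟨ψ, hψ, hψK'⟩ := exists_strictMonoOn_of_isChain hK'
  have himage : φ '' (K.image Finset.min) = ψ '' (K.image Finset.min) := by
    have hφimage : (K.image Finset.min).image φ = K.image Finset.max :=
      image_image.trans (image_congr hφK)
    have hψimage : (K'.image Finset.min).image ψ = K'.image Finset.max :=
      image_image.trans (image_congr hψK')
    rw [← coe_image, ← coe_image, hφimage, hmin, hψimage, hmax]
  have heqOn := eqOn_of_strictMonoOn_of_image_eq (finite_toSet _) hφ (hmin ▸ hψ) himage
  intro e he
  have hemin : e.min ∈ K.image Finset.min := mem_image_of_mem _ he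
  obtain ⟨f, hf, hfe⟩ := mem_image.1 (hmin ▸ hemin)
  have hmaxeq : e.max = f.max := by rw [← hφK e he, heqOn hemin, ← hfe, hψK' f hf]
  rwa [eq_of_min_eq_of_max_eq (hcard e he) (hcard' f hf) hfe.symm hmaxeq]

/-- The chains of `k` pairs of vertices of `V`. -/
noncomputable def pairChains (V : Finset α) (k : ℕ) : Finset (Finset (Finset α)) :=
  ((V.powersetCard 2).powersetCard k).filter fun K => IsChain Precedes (K : Set (Finset α))

lemma mem_pairChains {k : ℕ} : K ∈ pairChains V k ↔
    (∀ e ∈ K, e ⊆ V ∧ #e = 2) ∧ #K = k ∧ IsChain Precedes (K : Set (Finset α)) := by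
  simp only [pairChains, mem_filter, mem_powersetCard, subset_iff (s₁ := K), and_assoc]

lemma card_pairChains_le (V : Finset α) (k : ℕ) : #(pairChains V k) ≤ (#V).choose k ^ 2 := by
  have htarget : #((V.image ((↑) : α → WithTop α)).powersetCard k ×ˢ
      (V.image ((↑) : α → WithBot α)).powersetCard k) = (#V).choose k ^ 2 := by
    rw [card_product, card_powersetCard, card_powersetCard,
      card_image_of_injective _ WithTop.coe_injective,
      card_image_of_injective _ WithBot.coe_injective, sq]
  rw [← htarget]
  apply card_le_card_of_injOn
    fun K : Finset (Finset α) => (K.image Finset.min, K.image Finset.max)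
  · intro K hK
    obtain ⟨hpairs, hKk, hchain⟩ := mem_pairChains.1 hK
    have hends : ∀ e ∈ K, e.min ∈ V.image ((↑) : α → WithTop α) ∧
        e.max ∈ V.image ((↑) : α → WithBot α) := by
      intro e he
      obtain ⟨heV, hcard⟩ := hpairs e he
      obtain ⟨a, b, hab, rfl⟩ := exists_lt_and_eq_pair hcard
      rw [min_pair hab, max_pair hab]
      exact ⟨mem_image_of_mem _ (heV (by simp)), mem_image_of_mem _ (heV (by simp))⟩
    refine mem_product.2 ⟨mem_powersetCard.2 ⟨image_subset_iff.2 fun e he => (hends e he).1, ?_⟩,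
      mem_powersetCard.2 ⟨image_subset_iff.2 fun e he => (hends e he).2, ?_⟩⟩
    · rw [card_image_of_injOn (injOn_min_of_isChain hchain), hKk]
    · rw [card_image_of_injOn (injOn_max_of_isChain hchain), hKk]
  · intro K hK K' hK' heq
    obtain ⟨hpairs, -, hchain⟩ := mem_pairChains.1 hK
    obtain ⟨hpairs', -, hchain'⟩ := mem_pairChains.1 hK'
    obtain ⟨hmin, hmax⟩ := Prod.mk.inj heq
    have hcard : ∀ e ∈ K, #e = 2 := fun e he => (hpairs e he).2
    have hcard' : ∀ e ∈ K', #e = 2 := fun e he => (hpairs' e he).2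
    exact (isChain_subset_of_image_eq hchain hchain' hcard hcard' hmin hmax).antisymm
      (isChain_subset_of_image_eq hchain' hchain hcard' hcard hmin.symm hmax.symm)

lemma card_filter_exists_isChain_le {n : ℕ} (hV : #V = n * 2) (k : ℕ) :
    #{M ∈ perfectMatchings 2 V | ∃ K : Finset (Finset α),
      K ⊆ M ∧ IsChain Precedes (K : Set (Finset α)) ∧ #K = k} ≤
      (n * 2).choose k ^ 2 * (n - k).uniformBell 2 := by
  have hcover : {M ∈ perfectMatchings 2 V | ∃ K : Finset (Finset α),
      K ⊆ M ∧ IsChain Precedes (K : Set (Finset α)) ∧ #K = k} ⊆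
      (pairChains V k).biUnion fun K => {M ∈ perfectMatchings 2 V | K ⊆ M} := by
    intro M hM
    obtain ⟨hM, K, hKM, hchain, hKk⟩ := mem_filter.1 hM
    have hM' := mem_perfectMatchings.1 hM
    have hpairs : ∀ e ∈ K, e ⊆ V ∧ #e = 2 :=
      fun e he => ⟨hM'.subset_of_mem (hKM he), hM'.card_eq e (hKM he)⟩
    exact mem_biUnion.2 ⟨K, mem_pairChains.2 ⟨hpairs, hKk, hchain⟩, mem_filter.2 ⟨hM, hKM⟩⟩
  have hfiber : ∀ K ∈ pairChains V k,
      #{M ∈ perfectMatchings 2 V | K ⊆ M} ≤ (n - k).uniformBell 2 := by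
    intro K hK
    rw [← (mem_pairChains.1 hK).2.1]
    exact card_filter_subset_perfectMatchings_le two_ne_zero hV K
  calc _ ≤ _ := card_le_card hcover
    _ ≤ #(pairChains V k) * (n - k).uniformBell 2 := card_biUnion_le_card_mul _ _ _ hfiber
    _ ≤ _ := Nat.mul_le_mul_right _ (hV ▸ card_pairChains_le V k)

end Precedes

section Nesting

/-- Mirsky's theorem: the level sets of `c` are `k` antichains that cover `s`. -/
lemma exists_forall_lt_of_isChain_card_le {β : Type*} {rel : β → β → Prop} [IsStrictOrder β rel]
    {s : Finset β} {k : ℕ}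
    (hs : ∀ t : Finset β, t ⊆ s → IsChain rel (t : Set β) → #t ≤ k) :
    ∃ c : β → ℕ, (∀ a ∈ s, c a < k) ∧ ∀ a ∈ s, ∀ b ∈ s, rel a b → c a < c b := by
  let chainsBelow (a : β) : Finset (Finset β) :=
    {t ∈ s.powerset | IsChain rel (t : Set β) ∧ ∀ b ∈ t, rel b a}
  let height (a : β) : ℕ := (chainsBelow a).sup card
  have hextend : ∀ a ∈ s, ∃ t : Finset β, t ⊆ s ∧ IsChain rel (t : Set β) ∧
      (∀ b ∈ t, b = a ∨ rel b a) ∧ #t = height a + 1 := by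
    intro a ha
    obtain ⟨t, ht, hsup⟩ := (chainsBelow a).exists_mem_eq_sup ⟨∅, by simp [chainsBelow]⟩ card
    obtain ⟨hts, hchain, hbelow⟩ := mem_filter.1 ht
    have hat : a ∉ t := fun h => irrefl a (hbelow a h)
    refine ⟨insert a t, insert_subset ha (mem_powerset.1 hts), ?_, ?_, ?_⟩
    · rw [coe_insert]
      exact hchain.insert fun b hb _ => Or.inr (hbelow b hb)
    · exact fun b hb => (mem_insert.1 hb).imp_right (hbelow b)
    · rw [card_insert_of_notMem hat, ← hsup]
  refine ⟨height, fun a ha => ?_, fun a ha b _ hab => ?_⟩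
  · obtain ⟨t, hts, hchain, -, hcard⟩ := hextend a ha
    exact hcard.ge.trans (hs t hts hchain)
  · obtain ⟨t, hts, hchain, hle, hcard⟩ := hextend a ha
    have hbelow : ∀ x ∈ t, rel x b := by
      intro x hx
      obtain rfl | hxa := hle x hx
      exacts [hab, _root_.trans hxa hab]
    exact hcard.ge.trans (le_sup (mem_filter.2 ⟨mem_powerset.2 hts, hchain, hbelow⟩))

variable {α : Type*} [LinearOrder α] {r k : ℕ} {V : Finset α} {M M' : Finset (Finset α)}
  {χ χ' : α → ℕ}

lemma exists_min_eq_max_eq_of_isAntichain (hM : IsPerfectMatching r V M)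
    (hanti : IsAntichain Precedes (M : Set (Finset α))) (hV : V.Nonempty) :
    ∃ e ∈ M, e.min = V.min ∧ e.max = V.max := by
  obtain ⟨e, he, hve⟩ := hM.exists_mem (V.min'_mem hV)
  obtain ⟨f, hf, hwf⟩ := hM.exists_mem (V.max'_mem hV)
  have hmin : e.min = V.min :=
    le_antisymm (coe_min' hV ▸ min_le hve) (min_mono (hM.subset_of_mem he))
  have hmax : f.max = V.max :=
    le_antisymm (max_mono (hM.subset_of_mem hf)) (coe_max' hV ▸ le_max hwf)
  have hef : e = f := by
    by_contra hne
    have hdisj : Disjoint e f := hM.pairwiseDisjoint he hf hne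
    refine hanti he hf hne ⟨?_, ?_⟩
    · refine (hmin ▸ min_mono (hM.subset_of_mem hf)).lt_of_ne fun h => ?_
      exact disjoint_left.1 hdisj hve (mem_of_min (h.symm.trans (hmin.trans (coe_min' hV).symm)))
    · refine (hmax ▸ max_mono (hM.subset_of_mem he)).lt_of_ne fun h => ?_
      exact disjoint_left.1 hdisj (mem_of_max (h.trans (hmax.trans (coe_max' hV).symm))) hwf
  exact ⟨e, he, hmin, hef ▸ hmax⟩

lemma eq_of_isAntichain (hM : IsPerfectMatching 2 V M) (hM' : IsPerfectMatching 2 V M')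
    (hanti : IsAntichain Precedes (M : Set (Finset α)))
    (hanti' : IsAntichain Precedes (M' : Set (Finset α))) : M = M' := by
  induction V using Finset.strongInduction generalizing M M' with
  | H V ih =>
  obtain rfl | hV := V.eq_empty_or_nonempty
  · rw [← mem_perfectMatchings, perfectMatchings_empty two_ne_zero, mem_singleton] at hM hM'
    rw [hM, hM']
  obtain ⟨e, he, hmin, hmax⟩ := exists_min_eq_max_eq_of_isAntichain hM hanti hV
  obtain ⟨e', he', hmin', hmax'⟩ := exists_min_eq_max_eq_of_isAntichain hM' hanti' hV
  obtain rfl : e = e' := eq_of_min_eq_of_max_eq (hM.card_eq e he) (hM'.card_eq e' he')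
    (hmin.trans hmin'.symm) (hmax.trans hmax'.symm)
  have hedge : IsPerfectMatching 2 e {e} := hM.card_eq e he ▸ isPerfectMatching_singleton e
  have hsub : {e} ⊆ M := singleton_subset_iff.2 he
  have hsub' : {e} ⊆ M' := singleton_subset_iff.2 he'
  have hne : e.Nonempty := card_pos.1 (by rw [hM.card_eq e he]; exact two_pos)
  have hrest : M \ {e} = M' \ {e} :=
    ih (V \ e) (sdiff_ssubset (hM.subset_of_mem he) hne) (hM.sdiff hedge hsub)
      (hM'.sdiff hedge hsub') (hanti.subset (coe_subset.2 sdiff_subset))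
      (hanti'.subset (coe_subset.2 sdiff_subset))
  rw [← sdiff_union_of_subset hsub, hrest, sdiff_union_of_subset hsub']

/-- A colouring of the vertices of `M` that induces a colouring of its edges in which every colour
class is a nesting, that is, an antichain for `Precedes`. Colours live on the vertices rather than
on the edges so that colourings of different matchings can be compared. -/
structure IsNestingColoring (M : Finset (Finset α)) (χ : α → ℕ) : Prop where
  eq_of_mem : ∀ e ∈ M, ∀ x ∈ e, ∀ y ∈ e, χ x = χ y
  ne_of_precedes : ∀ e ∈ M, ∀ f ∈ M, Precedes e f → ∀ x ∈ e, ∀ y ∈ f, χ x ≠ χ y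

lemma exists_isNestingColoring (hM : IsPerfectMatching r V M)
    (hchains : ∀ K : Finset (Finset α), K ⊆ M → IsChain Precedes (K : Set (Finset α)) → #K ≤ k) :
    ∃ χ : α → ℕ, (∀ x ∈ V, χ x < k) ∧ IsNestingColoring M χ := by
  obtain ⟨c, hck, hc⟩ := exists_forall_lt_of_isChain_card_le hchains
  choose! edge hedge hmem using fun x => hM.exists_mem (x := x)
  have hedge_eq : ∀ e ∈ M, ∀ x ∈ e, edge x = e := fun e he x hx =>
    have hxV : x ∈ V := hM.subset_of_mem he hx
    hM.pairwiseDisjoint.elim_finset (hedge x hxV) he x (hmem x hxV) hx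
  refine ⟨fun x => c (edge x), fun x hx => hck _ (hedge x hx), ?_, ?_⟩
  · intro e he x hx y hy
    rw [hedge_eq e he x hx, hedge_eq e he y hy]
  · intro e he f hf hef x hx y hy
    rw [hedge_eq e he x hx, hedge_eq f hf y hy]
    exact (hc e he f hf hef).ne

/-- The edges of `M` all of whose vertices have colour `i`. -/
noncomputable def colorClass (M : Finset (Finset α)) (χ : α → ℕ) (i : ℕ) : Finset (Finset α) :=
  {e ∈ M | ∀ x ∈ e, χ x = i}

lemma isPerfectMatching_colorClass (hM : IsPerfectMatching r V M) (hχ : IsNestingColoring M χ)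
    (i : ℕ) : IsPerfectMatching r {x ∈ V | χ x = i} (colorClass M χ i) := by
  have hsub : colorClass M χ i ⊆ M := filter_subset _ M
  convert hM.mono hsub using 1
  ext x
  simp only [colorClass, mem_filter, mem_biUnion, id]
  constructor
  · rintro ⟨hxV, hxi⟩
    obtain ⟨e, he, hxe⟩ := hM.exists_mem hxV
    exact ⟨e, ⟨he, fun y hy => (hχ.eq_of_mem e he y hy x hxe).trans hxi⟩, hxe⟩
  · rintro ⟨e, ⟨he, hei⟩, hxe⟩
    exact ⟨hM.subset_of_mem he hxe, hei x hxe⟩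

lemma isAntichain_colorClass (hM : ∀ e ∈ M, e.Nonempty) (hχ : IsNestingColoring M χ) (i : ℕ) :
    IsAntichain Precedes (colorClass M χ i : Set (Finset α)) := by
  intro e he f hf _ hef
  obtain ⟨he, hei⟩ := mem_filter.1 he
  obtain ⟨hf, hfi⟩ := mem_filter.1 hf
  obtain ⟨x, hx⟩ := hM e he
  obtain ⟨y, hy⟩ := hM f hf
  exact hχ.ne_of_precedes e he f hf hef x hx y hy ((hei x hx).trans (hfi y hy).symm)

lemma subset_of_eqOn_isNestingColoring (hM : IsPerfectMatching 2 V M)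
    (hM' : IsPerfectMatching 2 V M') (hχ : IsNestingColoring M χ) (hχ' : IsNestingColoring M' χ')
    (heqOn : Set.EqOn χ χ' V) : M ⊆ M' := by
  intro e he
  have hne : ∀ e ∈ M, e.Nonempty := fun e he => card_pos.1 (hM.card_eq e he ▸ two_pos)
  have hne' : ∀ e ∈ M', e.Nonempty := fun e he => card_pos.1 (hM'.card_eq e he ▸ two_pos)
  obtain ⟨x, hx⟩ := hne e he
  have hvertices : {y ∈ V | χ y = χ x} = {y ∈ V | χ' y = χ x} :=
    filter_congr fun y hy => by rw [heqOn hy]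
  have hclass : colorClass M χ (χ x) = colorClass M' χ' (χ x) :=
    eq_of_isAntichain (isPerfectMatching_colorClass hM hχ _)
      (hvertices ▸ isPerfectMatching_colorClass hM' hχ' _)
      (isAntichain_colorClass hne hχ _) (isAntichain_colorClass hne' hχ' _)
  have heclass : e ∈ colorClass M χ (χ x) :=
    mem_filter.2 ⟨he, fun y hy => hχ.eq_of_mem e he y hy x hx⟩
  exact (mem_filter.1 (hclass ▸ heclass)).1

lemma card_filter_forall_isChain_card_le (V : Finset α) (k : ℕ) :
    #{M ∈ perfectMatchings 2 V | ∀ K : Finset (Finset α),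
      K ⊆ M → IsChain Precedes (K : Set (Finset α)) → #K ≤ k} ≤ k ^ #V := by
  have hcolor : ∀ M ∈ {M ∈ perfectMatchings 2 V | ∀ K : Finset (Finset α),
      K ⊆ M → IsChain Precedes (K : Set (Finset α)) → #K ≤ k},
      IsPerfectMatching 2 V M ∧
        ∃ χ : α → ℕ, (∀ x ∈ V, χ x < k) ∧ IsNestingColoring M χ := by
    intro M hM
    obtain ⟨hM, hchains⟩ := mem_filter.1 hM
    rw [mem_perfectMatchings] at hM
    exact ⟨hM, exists_isNestingColoring hM hchains⟩
  choose! hperfect χ hlt hχ using hcolor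
  have hcolorings : #(V.pi fun _ => range k) = k ^ #V := by
    rw [card_pi, prod_const, card_range]
  rw [← hcolorings]
  apply card_le_card_of_injOn fun M x _ => χ M x
  · exact fun M hM => mem_pi.2 fun x hx => mem_range.2 (hlt M hM x hx)
  · intro M hM M' hM' heq
    have heqOn : Set.EqOn (χ M) (χ M') V := fun x hx => congrFun (congrFun heq x) hx
    exact (subset_of_eqOn_isNestingColoring (hperfect M hM) (hperfect M' hM') (hχ M hM)
      (hχ M' hM') heqOn).antisymm
      (subset_of_eqOn_isNestingColoring (hperfect M' hM') (hperfect M hM) (hχ M' hM')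
      (hχ M hM) heqOn.symm)

end Nesting

section Pattern

variable {r : ℕ} {e f : Finset ℕ} {P : Finset (Finset ℕ)}

lemma formsPattern_comm : FormsPattern r e f P ↔ FormsPattern r f e P := by
  simp only [FormsPattern, union_comm e f, pair_comm (e.image _)]

lemma formsPattern_iff_of_strictMonoOn {φ : ℕ → ℕ} (hφ : StrictMonoOn φ ↑(e ∪ f))
    (himage : (e ∪ f).image φ = Icc 1 (2 * r)) :
    FormsPattern r e f P ↔ P = {e.image φ, f.image φ} := by
  constructor
  · rintro ⟨ψ, hψ, hψimage, rfl⟩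
    have heqOn : Set.EqOn ψ φ ↑(e ∪ f) :=
      eqOn_of_strictMonoOn_of_image_eq (finite_toSet _) hψ hφ <| by
        rw [← coe_image, ← coe_image, hψimage, himage]
    have he : e.image ψ = e.image φ := image_congr (heqOn.mono (coe_subset.2 subset_union_left))
    have hf : f.image ψ = f.image φ := image_congr (heqOn.mono (coe_subset.2 subset_union_right))
    rw [he, hf]
  · rintro rfl
    exact ⟨φ, hφ, himage, rfl⟩

lemma exists_strictMonoOn_quadruple {w x y z : ℕ} (hwx : w < x) (hxy : x < y) (hyz : y < z) :
    ∃ φ : ℕ → ℕ, StrictMonoOn φ {w, x, y, z} ∧ φ w = 1 ∧ φ x = 2 ∧ φ y = 3 ∧ φ z = 4 := by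
  let φ (t : ℕ) : ℕ := if t = w then 1 else if t = x then 2 else if t = y then 3 else 4
  have hw : φ w = 1 := if_pos rfl
  have hx : φ x = 2 := by grind
  have hy : φ y = 3 := by grind
  have hz : φ z = 4 := by grind
  refine ⟨φ, ?_, hw, hx, hy, hz⟩
  rintro s (rfl | rfl | rfl | rfl) t (rfl | rfl | rfl | rfl) hst <;> omega

lemma exists_forall_formsPattern_iff {w x y z : ℕ} (hwx : w < x) (hxy : x < y) (hyz : y < z) :
    ∃ φ : ℕ → ℕ, φ w = 1 ∧ φ x = 2 ∧ φ y = 3 ∧ φ z = 4 ∧ ∀ e f P, e ∪ f = {w, x, y, z} →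
      (FormsPattern 2 e f P ↔ P = {e.image φ, f.image φ}) := by
  obtain ⟨φ, hφ, hw, hx, hy, hz⟩ := exists_strictMonoOn_quadruple hwx hxy hyz
  refine ⟨φ, hw, hx, hy, hz, fun e f P hef => formsPattern_iff_of_strictMonoOn ?_ ?_⟩
  · simpa [hef] using hφ
  · simp only [hef, image_insert, image_singleton, hw, hx, hy, hz]
    decide

variable {a b c d : ℕ}

lemma formsPattern_pair_iff_eq_pAABB (hab : a < b) (hbc : b < c) (hcd : c < d) :
    FormsPattern 2 {a, b} {c, d} P ↔ P = pAABB := by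
  obtain ⟨φ, ha, hb, hc, hd, hφ⟩ := exists_forall_formsPattern_iff hab hbc hcd
  rw [hφ _ _ _ (by grind), pAABB]
  simp only [image_insert, image_singleton, ha, hb, hc, hd]

lemma formsPattern_pair_iff_eq_pABAB (hac : a < c) (hcb : c < b) (hbd : b < d) :
    FormsPattern 2 {a, b} {c, d} P ↔ P = pABAB := by
  obtain ⟨φ, ha, hc, hb, hd, hφ⟩ := exists_forall_formsPattern_iff hac hcb hbd
  rw [hφ _ _ _ (by grind), pABAB]
  simp only [image_insert, image_singleton, ha, hb, hc, hd]

lemma formsPattern_pair_iff_eq_nested (hac : a < c) (hcd : c < d) (hdb : d < b) :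
    FormsPattern 2 {a, b} {c, d} P ↔ P = {{1, 4}, {2, 3}} := by
  obtain ⟨φ, ha, hc, hd, hb, hφ⟩ := exists_forall_formsPattern_iff hac hcd hdb
  rw [hφ _ _ _ (by grind)]
  simp only [image_insert, image_singleton, ha, hb, hc, hd]

lemma exists_formsPattern_pair_iff (hab : a < b) (hcd : c < d) (hac : a < c) (hbc : b ≠ c)
    (hbd : b ≠ d) : (∃ P ∈ ({pAABB, pABAB} : Set (Finset (Finset ℕ))),
      FormsPattern 2 {a, b} {c, d} P) ↔ b < d := by
  obtain hbc | hcb := hbc.lt_or_gt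
  · simp [formsPattern_pair_iff_eq_pAABB hab hbc hcd, hbc.trans hcd]
  obtain hbd | hdb := hbd.lt_or_gt
  · simp [formsPattern_pair_iff_eq_pABAB hac hcb hbd, hbd]
  · have hAABB : ({{1, 4}, {2, 3}} : Finset (Finset ℕ)) ≠ pAABB := by decide
    have hABAB : ({{1, 4}, {2, 3}} : Finset (Finset ℕ)) ≠ pABAB := by decide
    simp [formsPattern_pair_iff_eq_nested hac hcd hdb, hAABB, hABAB, hdb.le]

lemma exists_formsPattern_iff_precedes (he : #e = 2) (hf : #f = 2) (hef : Disjoint e f) :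
    (∃ P ∈ ({pAABB, pABAB} : Set (Finset (Finset ℕ))), FormsPattern 2 e f P) ↔
      Precedes e f ∨ Precedes f e := by
  obtain ⟨a, b, hab, rfl⟩ := exists_lt_and_eq_pair he
  obtain ⟨c, d, hcd, rfl⟩ := exists_lt_and_eq_pair hf
  simp only [disjoint_insert_left, disjoint_singleton_left, mem_insert, mem_singleton,
    not_or] at hef
  obtain ⟨⟨hac, had⟩, hbc, hbd⟩ := hef
  rw [precedes_pair_iff hab hcd, precedes_pair_iff hcd hab]
  obtain hac | hca := Nat.lt_or_gt_of_ne hac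
  · rw [exists_formsPattern_pair_iff hab hcd hac hbc hbd]
    omega
  · simp only [formsPattern_comm (e := {a, b})]
    rw [exists_formsPattern_pair_iff hcd hab hca (Ne.symm had) (Ne.symm hbd)]
    omega

lemma isClique_iff_isChain_precedes {K : Finset (Finset ℕ)} (hcard : ∀ e ∈ K, #e = 2)
    (hdisj : (K : Set (Finset ℕ)).PairwiseDisjoint id) :
    IsClique 2 {pAABB, pABAB} K ↔ IsChain Precedes (K : Set (Finset ℕ)) := by
  have hpair : ∀ e ∈ K, ∀ f ∈ K, e ≠ f →
      ((∃ P ∈ ({pAABB, pABAB} : Set (Finset (Finset ℕ))), FormsPattern 2 e f P) ↔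
        Precedes e f ∨ Precedes f e) := fun e he f hf hef =>
    exists_formsPattern_iff_precedes (hcard e he) (hcard f hf) (hdisj he hf hef)
  constructor
  · exact fun h e he f hf hef => (hpair e he f hf hef).1 (h.2.2 e he f hf hef)
  · exact fun h => ⟨hcard, fun e he f hf hef => hdisj he hf hef,
      fun e he f hf hef => (hpair e he f hf hef).2 (h he hf hef)⟩

lemma IsClique.subset {Ps : Set (Finset (Finset ℕ))} {K L : Finset (Finset ℕ)}
    (hK : IsClique r Ps K) (hLK : L ⊆ K) : IsClique r Ps L :=
  ⟨fun e he => hK.1 e (hLK he), fun e he f hf => hK.2.1 e (hLK he) f (hLK hf),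
    fun e he f hf => hK.2.2 e (hLK he) f (hLK hf)⟩

lemma le_zClique_iff {Ps : Set (Finset (Finset ℕ))} {M : Finset (Finset ℕ)} {k : ℕ} :
    k ≤ zClique r Ps M ↔ ∃ K : Finset (Finset ℕ), K ⊆ M ∧ IsClique r Ps K ∧ #K = k := by
  have hbdd : BddAbove {k | ∃ K : Finset (Finset ℕ), K ⊆ M ∧ IsClique r Ps K ∧ #K = k} :=
    ⟨#M, fun _ ⟨_, hKM, _, hK⟩ => hK ▸ card_le_card hKM⟩
  have hne : {k | ∃ K : Finset (Finset ℕ), K ⊆ M ∧ IsClique r Ps K ∧ #K = k}.Nonempty :=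
    ⟨0, ∅, empty_subset M, by simp [IsClique], card_empty⟩
  refine ⟨fun hk => ?_, fun h => le_csSup hbdd h⟩
  obtain ⟨K, hKM, hK, hcard⟩ := Nat.sSup_mem hne hbdd
  obtain ⟨L, hLK, hL⟩ := exists_subset_card_eq (hk.trans hcard.ge)
  exact ⟨L, hLK.trans hKM, hK.subset hLK, hL⟩

variable {V : Finset ℕ} {M : Finset (Finset ℕ)} {k : ℕ}

lemma le_zClique_iff_exists_isChain (hM : IsPerfectMatching 2 V M) :
    k ≤ zClique 2 {pAABB, pABAB} M ↔ ∃ K : Finset (Finset ℕ),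
      K ⊆ M ∧ IsChain Precedes (K : Set (Finset ℕ)) ∧ #K = k := by
  refine le_zClique_iff.trans (exists_congr fun K => and_congr_right fun hKM => ?_)
  have hK := hM.mono hKM
  rw [isClique_iff_isChain_precedes hK.card_eq hK.pairwiseDisjoint]

lemma zClique_le_iff_forall_isChain (hM : IsPerfectMatching 2 V M) :
    zClique 2 {pAABB, pABAB} M ≤ k ↔ ∀ K : Finset (Finset ℕ),
      K ⊆ M → IsChain Precedes (K : Set (Finset ℕ)) → #K ≤ k := by
  constructor
  · intro hk K hKM hK
    exact ((le_zClique_iff_exists_isChain hM).2 ⟨K, hKM, hK, rfl⟩).trans hk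
  · intro h
    obtain ⟨K, hKM, hK, hcard⟩ := (le_zClique_iff_exists_isChain hM).1 le_rfl
    exact hcard ▸ h K hKM hK

end Pattern

section Estimates

lemma uniformBell_pos {r : ℕ} (hr : r ≠ 0) (n : ℕ) : 0 < n.uniformBell r :=
  Nat.pos_of_ne_zero fun h => (Nat.factorial_pos (n * r)).ne' <| by
    rw [← Nat.uniformBell_mul_eq n hr, h, zero_mul, zero_mul]

lemma uniformBell_two_succ (n : ℕ) :
    (n + 1).uniformBell 2 = (2 * n + 1) * n.uniformBell 2 := by
  rw [Nat.uniformBell_succ_left]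
  simp [mul_comm]

lemma factorial_le_uniformBell_two (n : ℕ) : n.factorial ≤ n.uniformBell 2 := by
  induction n with
  | zero => rw [Nat.uniformBell_zero_left, Nat.factorial_zero]
  | succ n ih =>
    rw [Nat.factorial_succ, uniformBell_two_succ]
    gcongr
    omega

lemma pow_mul_uniformBell_two_le {n k : ℕ} (hk : 2 * k ≤ n) :
    n ^ k * (n - k).uniformBell 2 ≤ n.uniformBell 2 := by
  induction k with
  | zero => simp
  | succ k ih =>
    have hstep : (n - k).uniformBell 2 =
        (2 * (n - (k + 1)) + 1) * (n - (k + 1)).uniformBell 2 := by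
      rw [← uniformBell_two_succ, show n - (k + 1) + 1 = n - k by omega]
    calc n ^ (k + 1) * (n - (k + 1)).uniformBell 2
        = n ^ k * (n * (n - (k + 1)).uniformBell 2) := by ring
      _ ≤ n ^ k * (n - k).uniformBell 2 := by
          rw [hstep]
          gcongr
          omega
      _ ≤ n.uniformBell 2 := ih (by omega)

lemma div_exp_one_pow_le_factorial (n : ℕ) : (n / exp 1 : ℝ) ^ n ≤ n.factorial := by
  have h : (n : ℝ) ^ n / n.factorial ≤ exp 1 ^ n := by
    simpa only [exp_one_pow] using pow_div_factorial_le_exp (n : ℝ) n.cast_nonneg n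
  rw [div_pow]
  exact (div_le_comm₀ (by positivity) (by positivity)).1 h

lemma choose_le_exp_one_mul_div_pow (m k : ℕ) :
    (m.choose k : ℝ) ≤ (exp 1 * m / k) ^ k := by
  obtain rfl | hk := k.eq_zero_or_pos
  · simp
  calc (m.choose k : ℝ) ≤ (m : ℝ) ^ k / k.factorial := Nat.choose_le_pow_div k m
    _ ≤ (m : ℝ) ^ k / (k / exp 1) ^ k := by
        gcongr
        exact div_exp_one_pow_le_factorial k
    _ = (exp 1 * m / k) ^ k := by
        rw [← div_pow]
        congr 1
        field_simp

end Estimates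

section Probability

variable {r : ℕ}

lemma card_matchingFamilies (hr : r ≠ 0) (n : ℕ) : #(matchingFamilies r n) = n.uniformBell r := by
  rw [matchingFamilies_eq_perfectMatchings hr, card_perfectMatchings hr]
  rw [Nat.card_Icc, Nat.add_sub_cancel, mul_comm]

/-- Frees `prob` from the classical decidability instance in its definition. -/
lemma prob_eq_card_div (r n : ℕ) (A : Finset (Finset ℕ) → Prop) [DecidablePred A] :
    prob r n A = (#{M ∈ matchingFamilies r n | A M} : ℝ) / #(matchingFamilies r n) := by
  unfold prob
  congr!

lemma prob_eq_card_perfectMatchings_div (hr : r ≠ 0) (n : ℕ) (A : Finset (Finset ℕ) → Prop)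
    [DecidablePred A] :
    prob r n A = #{M ∈ perfectMatchings r (Icc 1 (r * n)) | A M} / (n.uniformBell r : ℝ) := by
  rw [prob_eq_card_div, card_matchingFamilies hr, matchingFamilies_eq_perfectMatchings hr]

lemma prob_le_one (r n : ℕ) (A : Finset (Finset ℕ) → Prop) : prob r n A ≤ 1 :=
  div_le_one_of_le₀ (mod_cast card_filter_le _ _) (Nat.cast_nonneg _)

lemma prob_mono {A B : Finset (Finset ℕ) → Prop} (h : ∀ M, A M → B M) (r n : ℕ) :
    prob r n A ≤ prob r n B := by
  unfold prob
  gcongr with M _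
  exact h M

lemma prob_or_le (r n : ℕ) (A B : Finset (Finset ℕ) → Prop) :
    prob r n (fun M => A M ∨ B M) ≤ prob r n A + prob r n B := by
  simp only [prob_eq_card_div, filter_or, ← add_div]
  gcongr
  exact_mod_cast card_union_le _ _

lemma prob_add_prob_not (hr : r ≠ 0) (n : ℕ) (A : Finset (Finset ℕ) → Prop) :
    prob r n A + prob r n (fun M => ¬A M) = 1 := by
  have hpos : 0 < #(matchingFamilies r n) := card_matchingFamilies hr n ▸ uniformBell_pos hr n
  rw [prob, prob, ← add_div, ← Nat.cast_add, card_filter_add_card_filter_not,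
    div_self (Nat.cast_ne_zero.2 hpos.ne')]

lemma tendsto_prob_one_of_prob_not_le (hr : r ≠ 0) {A : ℕ → Finset (Finset ℕ) → Prop} {u : ℕ → ℝ}
    (hA : ∀ᶠ n in atTop, prob r n (fun M => ¬A n M) ≤ u n) (hu : Tendsto u atTop (𝓝 0)) :
    Tendsto (fun n => prob r n (A n)) atTop (𝓝 1) := by
  have hlower : Tendsto (fun n => 1 - u n) atTop (𝓝 1) := by simpa using hu.const_sub 1
  refine tendsto_of_tendsto_of_tendsto_of_le_of_le' hlower tendsto_const_nhds ?_
    (Eventually.of_forall fun n => prob_le_one r n (A n))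
  filter_upwards [hA] with n hn
  linarith [prob_add_prob_not hr n (A n)]

lemma tendsto_prob_and (hr : r ≠ 0) {A B : ℕ → Finset (Finset ℕ) → Prop}
    (hA : Tendsto (fun n => prob r n (A n)) atTop (𝓝 1))
    (hB : Tendsto (fun n => prob r n (B n)) atTop (𝓝 1)) :
    Tendsto (fun n => prob r n (fun M => A n M ∧ B n M)) atTop (𝓝 1) := by
  refine tendsto_prob_one_of_prob_not_le hr
    (u := fun n => 1 - prob r n (A n) + (1 - prob r n (B n))) (Eventually.of_forall fun n => ?_) ?_
  · simp only [not_and_or]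
    linarith [prob_or_le r n (fun M => ¬A n M) (fun M => ¬B n M), prob_add_prob_not hr n (A n),
      prob_add_prob_not hr n (B n)]
  · simpa using (hA.const_sub 1).add (hB.const_sub 1)

lemma prob_zClique_le_le (n k : ℕ) :
    prob 2 n (fun M => zClique 2 {pAABB, pABAB} M ≤ k) ≤ (exp 1 * k ^ 2 / n) ^ n := by
  obtain rfl | hn := n.eq_zero_or_pos
  · simpa only [pow_zero] using prob_le_one 2 0 _
  have hcount : #{M ∈ perfectMatchings 2 (Icc 1 (2 * n)) | zClique 2 {pAABB, pABAB} M ≤ k} ≤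
      k ^ (2 * n) := by
    rw [filter_congr fun M hM => zClique_le_iff_forall_isChain (mem_perfectMatchings.1 hM)]
    simpa using card_filter_forall_isChain_card_le (Icc 1 (2 * n)) k
  have htotal : (n / exp 1 : ℝ) ^ n ≤ n.uniformBell 2 :=
    (div_exp_one_pow_le_factorial n).trans (mod_cast factorial_le_uniformBell_two n)
  rw [prob_eq_card_perfectMatchings_div two_ne_zero]
  calc _ ≤ (k : ℝ) ^ (2 * n) / (n / exp 1) ^ n := by
        gcongr
        exact_mod_cast hcount
    _ = (exp 1 * k ^ 2 / n) ^ n := by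
        rw [pow_mul, ← div_pow]
        congr 1
        field_simp

lemma prob_le_zClique_le {n k : ℕ} (hk : 2 * k ≤ n) :
    prob 2 n (fun M => k ≤ zClique 2 {pAABB, pABAB} M) ≤ (4 * exp 1 ^ 2 * n / k ^ 2) ^ k := by
  obtain rfl | hn := n.eq_zero_or_pos
  · obtain rfl : k = 0 := by omega
    simpa only [pow_zero] using prob_le_one 2 0 _
  have hcount : #{M ∈ perfectMatchings 2 (Icc 1 (2 * n)) | k ≤ zClique 2 {pAABB, pABAB} M} ≤
      (n * 2).choose k ^ 2 * (n - k).uniformBell 2 := by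
    rw [filter_congr fun M hM => le_zClique_iff_exists_isChain (mem_perfectMatchings.1 hM)]
    exact card_filter_exists_isChain_le (by rw [Nat.card_Icc, Nat.add_sub_cancel, mul_comm]) k
  have hpos : (0 : ℝ) < n.uniformBell 2 := Nat.cast_pos.2 (uniformBell_pos two_ne_zero n)
  have hratio : ((n - k).uniformBell 2 : ℝ) / n.uniformBell 2 ≤ 1 / n ^ k := by
    rw [div_le_div_iff₀ hpos (by positivity), one_mul, mul_comm]
    exact_mod_cast pow_mul_uniformBell_two_le hk
  rw [prob_eq_card_perfectMatchings_div two_ne_zero]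
  calc _ ≤ ((n * 2).choose k : ℝ) ^ 2 * (n - k).uniformBell 2 / n.uniformBell 2 := by
        gcongr
        exact_mod_cast hcount
    _ ≤ ((exp 1 * (n * 2 : ℕ) / k) ^ k) ^ 2 * (1 / n ^ k) := by
        rw [mul_div_assoc]
        gcongr
        exact choose_le_exp_one_mul_div_pow (n * 2) k
    _ = (4 * exp 1 ^ 2 * n / k ^ 2) ^ k := by
        rw [pow_right_comm, ← one_div_pow, ← mul_pow]
        congr 1
        push_cast
        field_simp
        ring

lemma tendsto_prob_mul_sqrt_le_zClique {c : ℝ} (hc : 0 ≤ c) (hc' : exp 1 * c ^ 2 < 1) :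
    Tendsto (fun n : ℕ => prob 2 n fun M => c * √n ≤ zClique 2 {pAABB, pABAB} M)
      atTop (𝓝 1) := by
  refine tendsto_prob_one_of_prob_not_le two_ne_zero ?_
    (tendsto_pow_atTop_nhds_zero_of_lt_one (by positivity) hc')
  filter_upwards [eventually_gt_atTop 0] with n hn
  have hfloor : (⌊c * √n⌋₊ : ℝ) ≤ c * √n := Nat.floor_le (by positivity)
  calc _ ≤ prob 2 n fun M => zClique 2 {pAABB, pABAB} M ≤ ⌊c * √n⌋₊ :=
        prob_mono (fun M hM => Nat.le_floor (not_le.1 hM).le) 2 n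
    _ ≤ (exp 1 * ⌊c * √n⌋₊ ^ 2 / n) ^ n := prob_zClique_le_le n _
    _ ≤ (exp 1 * (c * √n) ^ 2 / n) ^ n := by gcongr
    _ = (exp 1 * c ^ 2) ^ n := by
        rw [mul_pow, sq_sqrt n.cast_nonneg, ← mul_assoc, mul_div_cancel_right₀ _ (by positivity)]

lemma tendsto_sqrt_natCast_atTop : Tendsto (fun n : ℕ => √(n : ℝ)) atTop atTop :=
  tendsto_sqrt_atTop.comp tendsto_natCast_atTop_atTop

lemma eventually_two_mul_floor_mul_sqrt_succ_le {c : ℝ} (hc : 0 ≤ c) :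
    ∀ᶠ n : ℕ in atTop, 2 * (⌊c * √n⌋₊ + 1) ≤ n := by
  filter_upwards [tendsto_sqrt_natCast_atTop.eventually_ge_atTop (2 * c + 2)] with n hn
  have hfloor : (⌊c * √n⌋₊ : ℝ) ≤ c * √n := Nat.floor_le (by positivity)
  have hreal : 2 * ((⌊c * √n⌋₊ : ℝ) + 1) ≤ n :=
    calc 2 * ((⌊c * √n⌋₊ : ℝ) + 1) ≤ 2 * (c * √n + 1) := by gcongr
      _ ≤ (2 * c + 2) * √n := by linarith
      _ ≤ √n * √n := by gcongr
      _ = n := mul_self_sqrt n.cast_nonneg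
  exact_mod_cast hreal

lemma tendsto_prob_zClique_le_mul_sqrt {c : ℝ} (hc : 2 * exp 1 < c) :
    Tendsto (fun n : ℕ => prob 2 n fun M => zClique 2 {pAABB, pABAB} M ≤ c * √n)
      atTop (𝓝 1) := by
  have hc₀ : 0 < c := lt_trans (by positivity) hc
  have hratio : (2 * exp 1 / c) ^ 2 < 1 :=
    pow_lt_one₀ (by positivity) ((div_lt_one hc₀).2 hc) two_ne_zero
  have hk : Tendsto (fun n : ℕ => ⌊c * √n⌋₊ + 1) atTop atTop :=
    (tendsto_add_atTop_nat 1).comp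
      (tendsto_nat_floor_atTop.comp (tendsto_sqrt_natCast_atTop.const_mul_atTop hc₀))
  refine tendsto_prob_one_of_prob_not_le two_ne_zero ?_
    ((tendsto_pow_atTop_nhds_zero_of_lt_one (by positivity) hratio).comp hk)
  filter_upwards [eventually_gt_atTop 0, eventually_two_mul_floor_mul_sqrt_succ_le hc₀.le]
    with n hn hkn
  have hlt : c * √n ≤ (⌊c * √n⌋₊ + 1 : ℕ) := mod_cast (Nat.lt_floor_add_one _).le
  calc _ ≤ prob 2 n fun M => ⌊c * √n⌋₊ + 1 ≤ zClique 2 {pAABB, pABAB} M :=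
        prob_mono (fun M hM => Nat.floor_lt (by positivity) |>.2 (not_le.1 hM)) 2 n
    _ ≤ (4 * exp 1 ^ 2 * n / (⌊c * √n⌋₊ + 1 : ℕ) ^ 2) ^ (⌊c * √n⌋₊ + 1) :=
        prob_le_zClique_le hkn
    _ ≤ (4 * exp 1 ^ 2 * n / (c * √n) ^ 2) ^ (⌊c * √n⌋₊ + 1) := by gcongr
    _ = ((2 * exp 1 / c) ^ 2) ^ (⌊c * √n⌋₊ + 1) := by
        rw [mul_pow, sq_sqrt n.cast_nonneg, mul_div_mul_right _ _ (by positivity)]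
        congr 1
        ring

end Probability

/-- **Theorem.** A.a.s. `z_{{AABB, ABAB}}(RM_n^(2)) = Θ(n^(1/2))`. -/
theorem aas_P1_pair :
    ∃ c₁ c₂ : ℝ, 0 < c₁ ∧ 0 < c₂ ∧
      Filter.Tendsto
        (fun n : ℕ => prob 2 n (fun M =>
          c₁ * (n : ℝ) ^ ((1 : ℝ) / 2) ≤ (zClique 2 {pAABB, pABAB} M : ℝ) ∧
          (zClique 2 {pAABB, pABAB} M : ℝ) ≤ c₂ * (n : ℝ) ^ ((1 : ℝ) / 2)))
        Filter.atTop (nhds 1) := by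
  refine ⟨1 / 2, 6, by norm_num, by norm_num, ?_⟩
  have he : exp 1 < 3 := exp_one_lt_three
  simp only [← sqrt_eq_rpow]
  exact tendsto_prob_and two_ne_zero
    (tendsto_prob_mul_sqrt_le_zClique (by norm_num) (by linarith))
    (tendsto_prob_zClique_le_mul_sqrt (by linarith))
end

section
/- Let 𝒫 be a set of r-patterns, let M be a nonempty ordered r-matching, let N ⊆ M be a 𝒫-clique, and let 𝒬 ⊆ 𝒫. Suppose that the relation ≺ on N defined by 'e ≺ f if and only if min e < min f and e, f form a pattern belonging to 𝒬' is transitive (hence a strict partial order on N). Then z_{𝒫∖𝒬}(M) ≥ |N| / z_𝒬(M). -/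
open Finset
open scoped Classical

/-! Order the clique `N` by `≺`. A chain is a `Qs`-clique. Distinct edges of `N` are disjoint, so
their minima differ and two edges forming a pattern in `Qs` are comparable; hence an antichain is a
`(Ps \ Qs)`-clique. As in Mirsky's theorem, the levels of the height function are antichains, and
there are at most as many levels as elements in a longest chain. -/

theorem height_lt_of_isChain_card_le {α : Type*} [Preorder α] {c : ℕ}
    (hc : ∀ C : Finset α, IsChain (· < ·) (C : Set α) → #C ≤ c) (a : α) : Order.height a < c := by
  by_contra! hca
  obtain ⟨p, -, hp⟩ := Order.exists_series_of_le_height a hca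
  have hchain : IsChain (· < ·) (Set.range p) := by
    rw [← Set.image_univ]
    exact IsChain.image_of_map_rel (· < ·) (· < ·) p (fun _ _ hij => p.strictMono hij)
      (isChain_of_trichotomous _)
  have hcard := hc (univ.map ⟨p, p.strictMono.injective⟩) (by simpa using hchain)
  simp only [card_map, card_univ, Fintype.card_fin, hp] at hcard
  omega

theorem fintype_card_le_mul_of_isAntichain_of_isChain {α : Type*} [Preorder α] [Fintype α] {w c : ℕ}
    (hw : ∀ A : Finset α, IsAntichain (· < ·) (A : Set α) → #A ≤ w)
    (hc : ∀ C : Finset α, IsChain (· < ·) (C : Set α) → #C ≤ c) :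
    Fintype.card α ≤ w * c := by
  have height_lt := height_lt_of_isChain_card_le hc
  choose height height_eq using fun a => ENat.ne_top_iff_exists.1 (height_lt a).ne_top
  have height_strictMono : StrictMono height := fun a b hab => by
    have := Order.height_strictMono hab (height_lt a).lt_top
    rwa [← height_eq, ← height_eq, Nat.cast_lt] at this
  have height_mem (a : α) : height a ∈ range c := by
    simpa only [mem_range, ← Nat.cast_lt (α := ℕ∞), height_eq] using height_lt a
  have card_level_le (k : ℕ) : #{a | height a = k} ≤ w := by
    refine hw _ fun a ha b hb _ hab => (height_strictMono hab).ne ?_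
    exact (mem_filter_univ a |>.1 ha).trans (mem_filter_univ b |>.1 hb).symm
  simpa only [card_univ, card_range] using
    card_le_mul_card_image_of_maps_to (fun a _ => height_mem a) w fun k _ => card_level_le k

theorem finset_card_le_mul_of_isAntichain_of_isChain {α : Type*} {s : Finset α} {rel : α → α → Prop}
    {w c : ℕ} (hirrefl : ∀ a ∈ s, ¬ rel a a)
    (htrans : ∀ a ∈ s, ∀ b ∈ s, ∀ d ∈ s, rel a b → rel b d → rel a d)
    (hw : ∀ A ⊆ s, IsAntichain rel (A : Set α) → #A ≤ w)
    (hc : ∀ C ⊆ s, IsChain rel (C : Set α) → #C ≤ c) : #s ≤ w * c := by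
  let lt : s → s → Prop := fun a b => rel a b
  have : IsStrictOrder s lt :=
    { irrefl := fun a => hirrefl a a.2
      trans := fun a b d => htrans a a.2 b b.2 d d.2 }
  let _ : PartialOrder s := partialOrderOfSO lt
  have hsub (t : Finset s) : t.map (.subtype _) ⊆ s := fun _ => property_of_mem_map_subtype t
  rw [← Fintype.card_coe]
  refine fintype_card_le_mul_of_isAntichain_of_isChain (fun A hA => ?_) (fun C hC => ?_)
  · rw [← card_map]
    refine hw _ (hsub A) ?_
    rw [coe_map]
    exact hA.image _ fun _ _ h => h
  · rw [← card_map]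
    refine hc _ (hsub C) ?_
    rw [coe_map]
    exact IsChain.image_of_map_rel lt rel _ (fun _ _ h => h) hC

theorem eq_of_disjoint_of_min_eq {α : Type*} [LinearOrder α] {s t : Finset α}
    (hd : Disjoint s t) (h : s.min = t.min) : s = t := by
  obtain rfl | hs := s.eq_empty_or_nonempty
  · exact (min_eq_top.1 (h ▸ min_empty)).symm
  · obtain ⟨a, ha⟩ := min_of_nonempty hs
    exact (disjoint_left.1 hd (mem_of_min ha) (mem_of_min (h ▸ ha))).elim

section PatternCliques

variable {r : ℕ} {Ps Qs : Set (Finset (Finset ℕ))} {M N K : Finset (Finset ℕ)} {e f : Finset ℕ}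

theorem FormsPattern.symm {P : Finset (Finset ℕ)} (h : FormsPattern r e f P) :
    FormsPattern r f e P := by
  simpa only [FormsPattern, union_comm, pair_comm] using h

/-- The relation `e ≺ f` on edges whose chains and antichains are compared with cliques.
`Finset.min` takes values in `WithTop ℕ`, so the empty edge has minimum `⊤`. -/
def PatternPrec (r : ℕ) (Qs : Set (Finset (Finset ℕ))) (e f : Finset ℕ) : Prop :=
  e.min < f.min ∧ ∃ Q ∈ Qs, FormsPattern r e f Q

theorem IsClique.card_le_zClique (hK : IsClique r Ps K) (hKM : K ⊆ M) : #K ≤ zClique r Ps M := by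
  refine le_csSup ⟨#M, ?_⟩ ⟨K, hKM, hK, rfl⟩
  rintro _ ⟨L, hLM, -, rfl⟩
  exact card_le_card hLM

theorem IsClique.subset_s9 (hN : IsClique r Ps N) (hKN : K ⊆ N) : IsClique r Ps K :=
  ⟨fun e he => hN.1 e (hKN he), fun e he f hf => hN.2.1 e (hKN he) f (hKN hf),
    fun e he f hf => hN.2.2 e (hKN he) f (hKN hf)⟩

theorem IsClique.of_isChain (hK : IsClique r Ps K)
    (hchain : IsChain (PatternPrec r Qs) (K : Set (Finset ℕ))) : IsClique r Qs K := by
  refine ⟨hK.1, hK.2.1, fun e he f hf hef => ?_⟩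
  obtain ⟨-, hQ⟩ | ⟨-, Q, hQ, hfe⟩ := hchain he hf hef
  · exact hQ
  · exact ⟨Q, hQ, hfe.symm⟩

theorem IsClique.sdiff_of_isAntichain (hK : IsClique r Ps K)
    (hanti : IsAntichain (PatternPrec r Qs) (K : Set (Finset ℕ))) :
    IsClique r (Ps \ Qs) K := by
  refine ⟨hK.1, hK.2.1, fun e he f hf hef => ?_⟩
  obtain ⟨P, hP, hPef⟩ := hK.2.2 e he f hf hef
  refine ⟨P, ⟨hP, fun hPQ => ?_⟩, hPef⟩
  obtain hlt | heq | hgt := lt_trichotomy e.min f.min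
  · exact hanti he hf hef ⟨hlt, P, hPQ, hPef⟩
  · exact hef (eq_of_disjoint_of_min_eq (hK.2.1 e he f hf hef) heq)
  · exact hanti hf he hef.symm ⟨hgt, P, hPQ, hPef.symm⟩

theorem dilworth_template_general (hNM : N ⊆ M) (hNcl : IsClique r Ps N)
    (htrans : ∀ e ∈ N, ∀ f ∈ N, ∀ g ∈ N,
      PatternPrec r Qs e f → PatternPrec r Qs f g → PatternPrec r Qs e g) :
    #N ≤ zClique r (Ps \ Qs) M * zClique r Qs M :=
  finset_card_le_mul_of_isAntichain_of_isChain (fun _ _ hprec => hprec.1.false) htrans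
    (fun _ hA hanti =>
      ((hNcl.subset_s9 hA).sdiff_of_isAntichain hanti).card_le_zClique (hA.trans hNM))
    (fun _ hC hchain => ((hNcl.subset_s9 hC).of_isChain hchain).card_le_zClique (hC.trans hNM))

end PatternCliques

/-- **Lemma (Dilworth template).** If the relation `e ≺ f ⟺ min e < min f` and `e, f` form a
pattern in `Qs ⊆ Ps` is transitive on a `Ps`-clique `N ⊆ M`, then
`z_{Ps∖Qs}(M) ≥ |N| / z_Qs(M)`. -/
theorem dilworth_template (r n : ℕ) (Ps Qs : Set (Finset (Finset ℕ))) (hQP : Qs ⊆ Ps)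
    (M N : Finset (Finset ℕ)) (hM : IsOrderedMatching r n M) (hMne : M.Nonempty)
    (hNM : N ⊆ M) (hNcl : IsClique r Ps N)
    (htrans : ∀ e ∈ N, ∀ f ∈ N, ∀ g ∈ N,
      (e.min < f.min ∧ ∃ Q ∈ Qs, FormsPattern r e f Q) →
      (f.min < g.min ∧ ∃ Q ∈ Qs, FormsPattern r f g Q) →
      (e.min < g.min ∧ ∃ Q ∈ Qs, FormsPattern r e g Q)) :
    (N.card : ℝ) / (zClique r Qs M : ℝ) ≤ (zClique r (Ps \ Qs) M : ℝ) :=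
  div_le_of_le_mul₀ (Nat.cast_nonneg _) (Nat.cast_nonneg _)
    (mod_cast dilworth_template_general hNM hNcl htrans)
end
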